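/- Fix an integer s ≥ 2. Define r : ℤ → ℚ by r(n) = 1/n! for n ≥ 0 and r(n) = 0 for n < 0. Let (i₁,…,i_{2s+1}) be given by i₁ = 3, i_j = 1 for 2 ≤ j ≤ 2s−1, and i_{2s} = i_{2s+1} = 0. Then the determinant of the (2s+1)×(2s+1) matrix with (j,ℓ)-entry r(s − 1 + i_j − j + ℓ) equals (s²(s+1)²(2s−1)(2s+3)/((3s+1)(3s+2)))·∏_{k=0}^{2s} k!/(s+k)!. -/

import Mathlib

/-!
Reversing rows and columns turns the matrix into `1 / (m j - ℓ)!` with nodes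
`m = (s - 1, s, s + 2, s + 3, …, 3 s - 1, 3 s + 2)` (`rowNode`). Since
`1 / (m - ℓ)! = m (m - 1) ⋯ (m - ℓ + 1) / m!`, pulling `1 / (m j)!` out of each row leaves a matrix
of monic polynomials of degrees `0, …, 2 s` evaluated at the nodes, whose determinant is the
Vandermonde determinant of the nodes (`det_rfact_sub`). The Vandermonde product is evaluated one
node at a time: the contribution of node `j` is compared with `j! / (s + j)!`, and for
`2 ≤ j < 2 s` the ratio is `(j + 1) / (j - 1)`, which telescopes (`prod_rows`). The last node
contributes the ratio `(2 s + 3) (s + 1) / ((3 s + 1) (3 s + 2))`.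
-/

/-- `r(n) = 1/n!` for `n ≥ 0` and `r(n) = 0` for `n < 0`. -/
def rfact (n : ℤ) : ℚ := if 0 ≤ n then 1 / (Nat.factorial n.toNat : ℚ) else 0

/-- The nodes of the matrix with reversed rows and columns, whose `(j, ℓ)`-entry is
`rfact (rowNode s j - ℓ)`. -/
def rowNode (s j : ℕ) : ℕ :=
  if j < 2 then s - 1 + j else if j < 2 * s then s + j else 3 * s + 2

/-- For a natural number `m`, the entry `r (m - l)` is a falling factorial divided by `m!`; both
sides vanish for `m < l`. -/
lemma rfact_sub (m l : ℕ) :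
    rfact ((m : ℤ) - l) = (1 / (m.factorial : ℚ)) * (descPochhammer ℚ l).eval (m : ℚ) := by
  rw [descPochhammer_eval_eq_descFactorial]
  unfold rfact
  split_ifs with h
  · have hl : l ≤ m := by omega
    have h1 : ((m : ℤ) - l).toNat = m - l := by omega
    rw [h1, ← Nat.factorial_mul_descFactorial hl]
    have h2 : ((m - l).factorial : ℚ) ≠ 0 := by positivity
    have h3 : (m.descFactorial l : ℚ) ≠ 0 := by
      exact_mod_cast (Nat.descFactorial_eq_zero_iff_lt.not.mpr (by omega))
    push_cast
    field_simp
  · rw [Nat.descFactorial_eq_zero_iff_lt.mpr (by omega)]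
    simp

lemma det_vandermonde_range (n : ℕ) (v : ℕ → ℚ) :
    (Matrix.vandermonde fun i : Fin n => v i).det =
      ∏ j ∈ Finset.range n, ∏ i ∈ Finset.range j, (v j - v i) := by
  rw [Matrix.det_vandermonde]
  have h1 : ∀ i : Fin n, ∏ j ∈ Finset.Ioi i, (v j - v i) =
      ∏ j : Fin n, if (i : ℕ) < j then v j - v i else 1 := by
    intro i
    rw [← Finset.prod_filter]
    congr 1
    ext j
    simp
  simp_rw [h1]
  rw [Finset.prod_comm,
    ← Fin.prod_univ_eq_prod_range (fun j => ∏ i ∈ Finset.range j, (v j - v i)) n]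
  refine Finset.prod_congr rfl fun j _ => ?_
  rw [Fin.prod_univ_eq_prod_range (fun i => if i < (j : ℕ) then v j - v i else 1) n,
    ← Finset.prod_filter]
  congr 1
  ext i
  have := j.isLt
  simp only [Finset.mem_filter, Finset.mem_range]
  omega

lemma det_rfact_sub (n : ℕ) (m : ℕ → ℕ) :
    Matrix.det (Matrix.of fun j l : Fin n => rfact ((m j : ℤ) - (l : ℕ))) =
      ∏ j ∈ Finset.range n,
        (1 / ((m j).factorial : ℚ) * ∏ i ∈ Finset.range j, ((m j : ℚ) - m i)) := by
  have h := Matrix.det_eval_matrixOfPolynomials_eq_det_vandermonde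
    (fun i : Fin n => (m i : ℚ)) (fun i => descPochhammer ℚ i)
    (fun i => descPochhammer_natDegree ℚ i) (fun i => monic_descPochhammer ℚ i)
  rw [det_vandermonde_range n (fun i => (m i : ℚ))] at h
  rw [Finset.prod_mul_distrib, h,
    ← Fin.prod_univ_eq_prod_range (fun j => 1 / ((m j).factorial : ℚ)) n, ← Matrix.det_mul_column]
  congr 1
  ext j l
  simp [rfact_sub]

lemma prod_sub_mul_factorial (a k : ℕ) :
    (∏ i ∈ Finset.range k, ((a : ℚ) + k - i)) * (a.factorial : ℚ) = ((a + k).factorial : ℚ) := by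
  induction k with
  | zero => simp
  | succ k ih =>
    rw [Finset.prod_range_succ', ← add_assoc, Nat.factorial_succ, Nat.cast_mul, ← ih]
    have : ∀ i ∈ Finset.range k, ((a : ℚ) + (k + 1 : ℕ) - (i + 1 : ℕ)) = (a : ℚ) + k - i := by
      intro i _
      push_cast
      ring
    rw [Finset.prod_congr rfl this]
    push_cast
    ring

/-- Differences to the first `k + 2` nodes, from the node `s + a + k + 2`. The middle nodes
`rowNode s (k + 2)` have `a = 0`, and the last one (`k + 2 = 2 s`) has `a = 2`. -/
lemma prod_node_sub (s k a : ℕ) (hs : 1 ≤ s) (hk : k + 2 ≤ 2 * s) :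
    (∏ i ∈ Finset.range (k + 2), (((s + a + k + 2 : ℕ) : ℚ) - rowNode s i)) * (a.factorial : ℚ) =
      (a + k + 3) * (a + k + 2) * ((a + k).factorial : ℚ) := by
  rw [Finset.prod_range_succ', Finset.prod_range_succ', ← prod_sub_mul_factorial]
  have h : ∀ i ∈ Finset.range k,
      (((s + a + k + 2 : ℕ) : ℚ) - rowNode s (i + 1 + 1)) = (a : ℚ) + k - i := by
    intro i hi
    have := Finset.mem_range.mp hi
    have : rowNode s (i + 1 + 1) = s + i + 2 := by
      unfold rowNode
      split_ifs <;> omega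
    rw [this]
    push_cast
    ring
  obtain ⟨t, rfl⟩ : ∃ t, s = t + 1 := ⟨s - 1, by omega⟩
  rw [Finset.prod_congr rfl h]
  simp only [rowNode]
  norm_num
  ring

lemma prod_rows (s k : ℕ) (hs : 1 ≤ s) (hk : k + 2 ≤ 2 * s) :
    ∏ j ∈ Finset.range (k + 2), (1 / ((rowNode s j).factorial : ℚ) *
        ∏ i ∈ Finset.range j, ((rowNode s j : ℚ) - rowNode s i)) =
      (s : ℚ) * (s + 1) * ((k + 1) * (k + 2) / 2) *
        ∏ j ∈ Finset.range (k + 2), (j.factorial : ℚ) / ((s + j).factorial : ℚ) := by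
  induction k with
  | zero =>
    obtain ⟨t, rfl⟩ : ∃ t, s = t + 1 := ⟨s - 1, by omega⟩
    simp only [Finset.prod_range_succ, rowNode, Finset.prod_range_zero]
    norm_num [Nat.factorial_succ]
    field_simp
  | succ k ih =>
    rw [show k + 1 + 2 = (k + 2) + 1 from rfl, Finset.prod_range_succ, ih (by omega),
      Finset.prod_range_succ _ (k + 2)]
    have h := prod_node_sub s k 0 hs (by omega)
    have hn : rowNode s (k + 2) = s + 0 + k + 2 := by
      unfold rowNode
      split_ifs <;> omega
    rw [hn]
    simp only [Nat.factorial_zero, Nat.cast_one, mul_one] at h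
    rw [h, show s + 0 + k + 2 = s + (k + 2) by omega, zero_add,
      Nat.factorial_succ (k + 1), Nat.factorial_succ k]
    push_cast
    field_simp
    ring

/-- For `i₁ = 3`, `i_j = 1` for `2 ≤ j ≤ 2s−1` and `i_{2s} = i_{2s+1} = 0`, the
determinant of the `(2s+1)×(2s+1)` matrix with `(j,ℓ)`-entry `r(s − 1 + i_j − j + ℓ)`
equals `(s²(s+1)²(2s−1)(2s+3)/((3s+1)(3s+2)))·∏_{k=0}^{2s} k!/(s+k)!`. -/
theorem harris_tu_determinant_cube (s : ℕ) (hs : 2 ≤ s) :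
    Matrix.det (Matrix.of fun j ℓ : Fin (2*s + 1) =>
        rfact ((s : ℤ) - 1 +
          (if (j : ℕ) = 0 then 3 else if (j : ℕ) < 2*s - 1 then 1 else 0) +
          (ℓ : ℕ) - (j : ℕ))) =
      (s : ℚ)^2 * ((s : ℚ) + 1)^2 * (2*(s : ℚ) - 1) * (2*(s : ℚ) + 3) /
          ((3*(s : ℚ) + 1) * (3*(s : ℚ) + 2)) *
        ∏ k ∈ Finset.range (2*s + 1),
          (Nat.factorial k : ℚ) / (Nat.factorial (s + k) : ℚ) := by
  rw [← Matrix.det_submatrix_equiv_self (Fin.revPerm : Equiv.Perm (Fin (2 * s + 1)))]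
  have hM : (Matrix.of fun j ℓ : Fin (2*s + 1) =>
        rfact ((s : ℤ) - 1 +
          (if (j : ℕ) = 0 then 3 else if (j : ℕ) < 2*s - 1 then 1 else 0) +
          (ℓ : ℕ) - (j : ℕ))).submatrix Fin.revPerm Fin.revPerm =
      Matrix.of fun j l : Fin (2 * s + 1) => rfact ((rowNode s j : ℤ) - (l : ℕ)) := by
    ext j l
    have := j.isLt
    have := l.isLt
    simp only [Matrix.submatrix_apply, Matrix.of_apply, Fin.revPerm_apply, Fin.val_rev]
    congr 1
    unfold rowNode
    split_ifs <;> omega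
  rw [hM, det_rfact_sub]
  obtain ⟨k, hk⟩ : ∃ k, 2 * s = k + 2 := ⟨2 * s - 2, by omega⟩
  have hkq : (k : ℚ) = 2 * s - 2 := by
    have : (2 * s : ℚ) = k + 2 := by exact_mod_cast hk
    linarith
  have hlast := prod_node_sub s k 2 (by omega) hk.ge
  have hn : rowNode s (k + 2) = s + 2 + k + 2 := by
    unfold rowNode
    split_ifs <;> omega
  rw [hk, Finset.prod_range_succ, prod_rows s k (by omega) hk.ge, Finset.prod_range_succ _ (k + 2),
    hn]
  have hprod : ∏ i ∈ Finset.range (k + 2), (((s + 2 + k + 2 : ℕ) : ℚ) - rowNode s i) =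
      (2 + k + 3) * (2 + k + 2) * ((k + 2).factorial : ℚ) / 2 := by
    rw [add_comm 2 k] at hlast
    rw [eq_div_iff two_ne_zero]
    simpa using hlast
  rw [hprod, show s + 2 + k + 2 = s + (k + 2) + 1 + 1 by omega, Nat.factorial_succ,
    Nat.factorial_succ]
  push_cast
  rw [hkq]
  have h1 : (s : ℚ) + (2 * s - 2 + 2) + 1 + 1 = 3 * s + 2 := by ring
  have h2 : (s : ℚ) + (2 * s - 2 + 2) + 1 = 3 * s + 1 := by ring
  rw [h1, h2]
  field_simp
  ring
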